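/- For all real numbers λ > 0, φ > 0 and ϱ > 0, the iterated integral ∫₀^λ ∫₀^{ϱ/(φx)} e^{-x - y} dy dx equals 1 - e^{-λ} - Σ_{i=0}^∞ ((-1)^i λ^{i+1} / i!) · Ei(i+2, ϱ/(λφ)), where the series converges. -/

import Mathlib

open MeasureTheory Real

/-- Generalized exponential integral `Ei(n, s) = ∫₁^∞ e^{-s t} t^{-n} dt`. -/
noncomputable def Ei (n : ℕ) (s : ℝ) : ℝ :=
  ∫ t in Set.Ioi (1 : ℝ), Real.exp (-s * t) / t ^ n

lemma aux_cov (l φ ϱ : ℝ) (hl : 0 < l) (hφ : 0 < φ) (hϱ : 0 < ϱ) :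
    ∫ x in Set.Ioo 0 l, Real.exp (-x) * Real.exp (-(ϱ / (φ * x)))
      = ∫ t in Set.Ioi (1 : ℝ), l / t ^ 2 * (Real.exp (-(l / t)) * Real.exp (-(ϱ / (l * φ)) * t)) := by
  have him : (fun t : ℝ => l / t) '' Set.Ioi 1 = Set.Ioo 0 l := by
    ext x
    simp only [Set.mem_image, Set.mem_Ioi, Set.mem_Ioo]
    constructor
    · rintro ⟨t, ht, rfl⟩
      exact ⟨by positivity, div_lt_self hl ht⟩
    · rintro ⟨h0, h1⟩
      exact ⟨l / x, (one_lt_div h0).2 h1, by field_simp⟩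
  rw [← him, integral_image_eq_integral_abs_deriv_smul (f' := fun t => -l / t ^ 2) measurableSet_Ioi]
  · apply setIntegral_congr_fun measurableSet_Ioi
    intro t ht
    have ht0 : (0 : ℝ) < t := lt_trans one_pos ht
    have h1 : |-l / t ^ 2| = l / t ^ 2 := by
      rw [neg_div, abs_neg, abs_of_pos (by positivity)]
    have h2 : ϱ / (φ * (l / t)) = ϱ / (l * φ) * t := by field_simp
    simp only [h1, h2, smul_eq_mul, neg_mul]
  · intro t ht
    have ht0 : t ≠ 0 := (lt_trans one_pos ht).ne'
    have := ((hasDerivAt_const t l).div (hasDerivAt_id t) ht0).hasDerivWithinAt (s := Set.Ioi 1)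
    have e : (0 * id t - l * 1) / (id t) ^ 2 = -l / t ^ 2 := by simp
    rw [e] at this
    exact this
  · intro a ha b hb hab
    have ha0 : a ≠ 0 := (lt_trans one_pos ha).ne'
    have hb0 : b ≠ 0 := (lt_trans one_pos hb).ne'
    simp only at hab
    field_simp at hab
    exact hab.symm

lemma aux_hasSum (l s : ℝ) (hl : 0 < l) (hs : 0 < s) :
    HasSum (fun i : ℕ => (-1 : ℝ) ^ i * l ^ (i + 1) / (Nat.factorial i) * Ei (i + 2) s)
      (∫ t in Set.Ioi (1 : ℝ), l / t ^ 2 * (Real.exp (-(l / t)) * Real.exp (-s * t))) := by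
  have hexp : IntegrableOn (fun t => Real.exp (-s * t)) (Set.Ioi 1) :=
    exp_neg_integrableOn_Ioi 1 hs
  have hsum : Summable (fun i : ℕ => l ^ (i + 1) / (Nat.factorial i : ℝ)) := by
    have := (Real.summable_pow_div_factorial l).mul_left l
    refine this.congr fun i => ?_
    rw [pow_succ]; ring
  simp only [Ei, ← integral_const_mul]
  refine hasSum_integral_of_dominated_convergence
    (fun i t => l ^ (i + 1) / (Nat.factorial i : ℝ) * Real.exp (-s * t)) ?_ ?_ ?_ ?_ ?_
  · intro i
    apply Measurable.aestronglyMeasurable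
    fun_prop
  · intro i
    filter_upwards [ae_restrict_mem measurableSet_Ioi] with t ht
    have ht0 : (1 : ℝ) < t := ht
    rw [norm_mul, norm_div, norm_mul, norm_pow, norm_neg, norm_one, one_pow, one_mul, norm_div]
    have e1 : ‖l ^ (i + 1)‖ = l ^ (i + 1) := Real.norm_of_nonneg (by positivity)
    have e2 : ‖(Nat.factorial i : ℝ)‖ = Nat.factorial i := Real.norm_of_nonneg (by positivity)
    have e3 : ‖t ^ (i + 2)‖ = t ^ (i + 2) := Real.norm_of_nonneg (by positivity)
    have e4 : ‖Real.exp (-s * t)‖ = Real.exp (-s * t) := Real.norm_of_nonneg (by positivity)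
    rw [e1, e2, e3, e4]
    gcongr
    exact div_le_self (by positivity) (one_le_pow₀ ht0.le)
  · exact Filter.Eventually.of_forall fun t => hsum.mul_right _
  · simp only [tsum_mul_right]
    exact hexp.const_mul _
  · filter_upwards [ae_restrict_mem measurableSet_Ioi] with t ht
    have ht0 : t ≠ 0 := (lt_trans one_pos ht).ne'
    have h := NormedSpace.expSeries_div_hasSum_exp (-(l / t))
    rw [← Real.exp_eq_exp_ℝ] at h
    have h2 := h.mul_left (l / t ^ 2 * Real.exp (-s * t))
    have e1 : (fun i : ℕ => (-1 : ℝ) ^ i * l ^ (i + 1) / (Nat.factorial i) * (Real.exp (-s * t) / t ^ (i + 2)))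
        = fun i : ℕ => l / t ^ 2 * Real.exp (-s * t) * ((-(l / t)) ^ i / (Nat.factorial i : ℝ)) := by
      funext i
      rw [neg_pow (l / t), div_pow]
      field_simp
      ring
    have e2 : l / t ^ 2 * (Real.exp (-(l / t)) * Real.exp (-s * t))
        = l / t ^ 2 * Real.exp (-s * t) * Real.exp (-(l / t)) := by ring
    rw [e1, e2]
    exact h2

theorem stmt_5 (l φ ϱ : ℝ) (hl : 0 < l) (hφ : 0 < φ) (hϱ : 0 < ϱ) :
    Summable (fun i : ℕ =>
      (-1 : ℝ) ^ i * l ^ (i + 1) / (Nat.factorial i) * Ei (i + 2) (ϱ / (l * φ))) ∧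
    ∫ x in (0 : ℝ)..l, (∫ y in (0 : ℝ)..(ϱ / (φ * x)), Real.exp (-x - y))
      = 1 - Real.exp (-l)
        - ∑' i : ℕ, (-1 : ℝ) ^ i * l ^ (i + 1) / (Nat.factorial i) * Ei (i + 2) (ϱ / (l * φ)) := by
  have hs : 0 < ϱ / (l * φ) := by positivity
  have H := aux_hasSum l _ hl hs
  refine ⟨H.summable, ?_⟩
  rw [H.tsum_eq, ← aux_cov l φ ϱ hl hφ hϱ, ← integral_Ioc_eq_integral_Ioo,
    ← intervalIntegral.integral_of_le hl.le]
  have hinner : ∀ x : ℝ, (∫ y in (0 : ℝ)..(ϱ / (φ * x)), Real.exp (-x - y))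
      = Real.exp (-x) - Real.exp (-x) * Real.exp (-(ϱ / (φ * x))) := by
    intro x
    simp only [sub_eq_add_neg, Real.exp_add, intervalIntegral.integral_const_mul]
    rw [intervalIntegral.integral_comp_neg (fun y => Real.exp y), integral_exp]
    simp
    ring
  have hI1 : IntervalIntegrable (fun x : ℝ => Real.exp (-x)) volume 0 l :=
    (by fun_prop : Continuous fun x : ℝ => Real.exp (-x)).intervalIntegrable _ _
  have hI2 : IntervalIntegrable (fun x : ℝ => Real.exp (-x) * Real.exp (-(ϱ / (φ * x)))) volume 0 l := by
    refine hI1.mono_fun (Measurable.aestronglyMeasurable (by fun_prop)) ?_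
    filter_upwards [ae_restrict_mem measurableSet_uIoc] with x hx
    rw [Set.uIoc_of_le hl.le] at hx
    have hx0 : 0 < x := hx.1
    have h0 : 0 < ϱ / (φ * x) := by positivity
    rw [norm_mul]
    refine mul_le_of_le_one_right (norm_nonneg _) ?_
    rw [Real.norm_of_nonneg (by positivity)]
    exact Real.exp_le_one_iff.2 (by linarith)
  simp only [hinner]
  rw [intervalIntegral.integral_sub hI1 hI2,
    intervalIntegral.integral_comp_neg (fun y => Real.exp y), integral_exp]
  simp
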